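/- Let k₁, k₂ be real with 0 < k₁ ≤ k₂, let 0 < c < 1/2, let x₁, x₂ ∈ ℕ, p ∈ ℤ, and y ∈ ℝ. Then both series below converge absolutely and S_{x₂}(y; k₂−k₁+1/2, k₁+k₂−1/2, k₁−k₂+x₁−x₂+1/2) · ∑_{m=0}^∞ [∏_{l=0}^{m−1} ((p+k₁−k₂+1/2+l)² + y)] (c/(c−1))^m / (m! Γ(p+x₂−x₁+1+m)) = ∑_{n=0}^∞ C_n · S_n(y; k₂−k₁+1/2, k₁+k₂−1/2, k₁−k₂+p+1/2) · M_{n+p}(x₁; 2k₁, c) · M_n(x₂; 2k₂, c), where C_n = (−1)^{x₁+x₂} c^{n+x₁} (1−c)^{2k₁+p} (2k₁)_{x₁} (2k₂)_{x₂} / (n! Γ(n+p+1)), 1/Γ is interpreted as 0 at non-positive integers, and a summand on the right with n+p < 0 is interpreted as 0 (consistently with 1/Γ(n+p+1) = 0 there). The left-hand sum is the regularized Gauss hypergeometric series ₂F₁(p+k₁−k₂+1/2+i√y, p+k₁−k₂+1/2−i√y; p+x₂−x₁+1; c/(c−1))/Γ(p+x₂−x₁+1). (This is the paper's general bilinear generating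 function for Meixner polynomials, stated for 0 < c < 1/2 where all series converge absolutely.) -/

import Mathlib

open Finset

/-- Pochhammer symbol `(q)_m = q(q+1)⋯(q+m−1)` for a real `q`. -/
noncomputable def poch (q : ℝ) (m : ℕ) : ℝ := ∏ l ∈ Finset.range m, (q + l)

/-- The continuous dual Hahn polynomial
`S_n(y; a, b, c) = ∑_{j=0}^n (−1)^j (n choose j) (a+b+j)_{n−j} (a+c+j)_{n−j}
  ∏_{l=0}^{j−1} ((a+l)² + y)`. -/
noncomputable def cdHahn (n : ℕ) (y a b c : ℝ) : ℝ :=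
  ∑ j ∈ Finset.range (n + 1),
    (-1 : ℝ) ^ j * (n.choose j : ℝ) * poch (a + b + j) (n - j) * poch (a + c + j) (n - j) *
      ∏ l ∈ Finset.range j, ((a + l) ^ 2 + y)

/-- The Meixner polynomial
`M_n(x; β, c) = ∑_{j=0}^n ((−n)_j (−x)_j/((β)_j j!)) (1 − 1/c)^j = ₂F₁(−n,−x;β;1−1/c)`. -/
noncomputable def meixner (n x : ℕ) (β c : ℝ) : ℝ :=
  ∑ j ∈ Finset.range (n + 1),
    poch (-(n : ℝ)) j * poch (-(x : ℝ)) j / (poch β j * (j.factorial : ℝ)) * (1 - 1 / c) ^ j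

/-!
The product `M_{x₁}(p + n) M_{x₂}(n)` of two Meixner polynomials is bispectral: a second order
difference operator in `n` acts on it in the same way as one acting on the pair `(x₁, x₂)` along
diagonals. Paired with the sequence `cⁿ S_n / (n! Γ(n + p + 1))`, the operator in `n` is the adjoint
of the three-term recurrence of the continuous dual Hahn polynomials, so summation by parts shows
that the right-hand side satisfies a three-term recurrence along the diagonals `x₁ - x₂ = const`.
This is again the recurrence of continuous dual Hahn polynomials, now in the degree `x₂`, and it is
solved by the left-hand side. On the boundary, where `x₁ = 0` or `x₂ = 0`, a single Meixner
polynomial remains. Expanding `S_n` and interchanging the sums leaves its moments against the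
negative binomial weight, and Euler's transformation of the Gauss series brings the result into the
required form.
-/

open Filter Asymptotics Topology

/-! ### Pochhammer symbols -/

lemma poch_zero (q : ℝ) : poch q 0 = 1 := by simp [poch]

lemma poch_succ (q : ℝ) (m : ℕ) : poch q (m + 1) = poch q m * (q + m) :=
  prod_range_succ _ _

lemma poch_succ_left (q : ℝ) (m : ℕ) : poch q (m + 1) = q * poch (q + 1) m := by
  simp only [poch, prod_range_succ', Nat.cast_zero, add_zero, mul_comm q]
  congr 1
  exact prod_congr rfl fun l _ => by push_cast; ring

lemma poch_ne_zero {q : ℝ} (hq : ∀ l : ℕ, q + l ≠ 0) (m : ℕ) : poch q m ≠ 0 :=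
  prod_ne_zero_iff.2 fun l _ => hq l

lemma poch_neg_natCast_eq_zero {x j : ℕ} (h : x < j) : poch (-(x : ℝ)) j = 0 :=
  prod_eq_zero (mem_range.2 h) (neg_add_cancel _)

lemma factorial_mul_poch_neg_natCast_add (x m : ℕ) :
    (m.factorial : ℝ) * poch (-((x + m : ℕ) : ℝ)) x = (-1) ^ x * (x + m).factorial := by
  induction x with
  | zero => simp [poch_zero]
  | succ x ih =>
    have h : -((x + 1 + m : ℕ) : ℝ) + 1 = -((x + m : ℕ) : ℝ) := by push_cast; ring
    rw [poch_succ_left, h, mul_left_comm, ih, show x + 1 + m = x + m + 1 by ring,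
      Nat.factorial_succ]
    push_cast
    ring

lemma poch_nonneg {q : ℝ} (hq : 0 ≤ q) (m : ℕ) : 0 ≤ poch q m :=
  prod_nonneg fun l _ => by positivity

lemma abs_poch_le_poch {q r : ℝ} (h : |q| ≤ r) (m : ℕ) : |poch q m| ≤ poch r m := by
  simp only [poch, abs_prod]
  refine prod_le_prod (fun _ _ => abs_nonneg _) fun l _ => ?_
  calc |q + l| ≤ |q| + |(l : ℝ)| := abs_add_le _ _
    _ ≤ r + l := by rw [Nat.abs_cast]; gcongr

lemma inv_Gamma_eq_mul_inv_Gamma_add_one (s : ℝ) :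
    (Real.Gamma s)⁻¹ = s * (Real.Gamma (s + 1))⁻¹ := by
  rcases eq_or_ne s 0 with rfl | hs
  · simp
  · rw [Real.Gamma_add_one hs]
    field_simp

lemma poch_mul_inv_Gamma_add (s : ℝ) (r : ℕ) :
    poch s r * (Real.Gamma (s + r))⁻¹ = (Real.Gamma s)⁻¹ := by
  induction r with
  | zero => simp [poch_zero]
  | succ r ih =>
    rw [← ih, inv_Gamma_eq_mul_inv_Gamma_add_one (s + r), poch_succ]
    push_cast
    ring_nf

lemma poch_neg_mul_inv_Gamma_add_one (s : ℝ) (x : ℕ) :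
    poch (-s) x * (Real.Gamma (s + 1))⁻¹ = (-1) ^ x * (Real.Gamma (s + 1 - x))⁻¹ := by
  induction x with
  | zero => simp [poch_zero]
  | succ x ih =>
    have h := inv_Gamma_eq_mul_inv_Gamma_add_one (s - x)
    rw [show s - x + 1 = s + 1 - x by ring] at h
    rw [poch_succ, mul_right_comm, ih, Nat.cast_succ, show s + 1 - (x + 1) = s - x by ring, h]
    ring

/-- The product `(q + i√y)_m (q - i√y)_m` of conjugate Pochhammer symbols, in real form. -/
noncomputable def quadPoch (q y : ℝ) (m : ℕ) : ℝ := ∏ l ∈ range m, ((q + l) ^ 2 + y)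

lemma quadPoch_zero (q y : ℝ) : quadPoch q y 0 = 1 := by simp [quadPoch]

lemma quadPoch_succ (q y : ℝ) (m : ℕ) :
    quadPoch q y (m + 1) = quadPoch q y m * ((q + m) ^ 2 + y) :=
  prod_range_succ _ _

lemma quadPoch_add (q y : ℝ) (k m : ℕ) :
    quadPoch q y (k + m) = quadPoch q y k * quadPoch (q + k) y m := by
  simp only [quadPoch, prod_range_add, Nat.cast_add, add_assoc]

lemma quadPoch_succ_left (q y : ℝ) (m : ℕ) :
    quadPoch q y (m + 1) = (q ^ 2 + y) * quadPoch (q + 1) y m := by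
  simpa [add_comm, quadPoch_succ, quadPoch_zero] using quadPoch_add q y 1 m

/-! ### Continuous dual Hahn polynomials -/

lemma cdHahn_eq_sum_quadPoch (n : ℕ) (y a b d : ℝ) :
    cdHahn n y a b d = ∑ j ∈ range (n + 1), (-1 : ℝ) ^ j * (n.choose j : ℝ) *
      poch (a + b + j) (n - j) * poch (a + d + j) (n - j) * quadPoch a y j :=
  rfl

lemma cdHahn_zero (y a b d : ℝ) : cdHahn 0 y a b d = 1 := by
  simp [cdHahn, poch_zero]

-- Multiplication by `a² + y` shifts the basis `quadPoch (a + 1) y` to `quadPoch a y`; comparing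
-- coefficients leaves Pascal's rule.
lemma cdHahn_succ_eq_sub_shift (n : ℕ) (y a b d : ℝ) :
    cdHahn (n + 1) y a b d =
      (n + a + b) * (n + a + d) * cdHahn n y a b d - (a ^ 2 + y) * cdHahn n y (a + 1) b d := by
  have hn : cdHahn n y a b d = ∑ j ∈ range (n + 2), (-1 : ℝ) ^ j * (n.choose j : ℝ) *
      poch (a + b + j) (n - j) * poch (a + d + j) (n - j) * quadPoch a y j := by
    rw [sum_range_succ]
    simp [cdHahn_eq_sum_quadPoch]
  have hcoeff : ∀ j ∈ range (n + 1),
      (-1 : ℝ) ^ (j + 1) * ((n + 1).choose (j + 1) : ℝ) *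
        poch (a + b + (j + 1 : ℕ)) (n - j) * poch (a + d + (j + 1 : ℕ)) (n - j) =
      (n + a + b) * (n + a + d) * ((-1 : ℝ) ^ (j + 1) * (n.choose (j + 1) : ℝ) *
        poch (a + b + (j + 1 : ℕ)) (n - (j + 1)) * poch (a + d + (j + 1 : ℕ)) (n - (j + 1))) -
      (-1 : ℝ) ^ j * (n.choose j : ℝ) *
        poch (a + 1 + b + j) (n - j) * poch (a + 1 + d + j) (n - j) := by
    intro j hj
    have hshift (e : ℝ) : a + 1 + e + j = a + e + (j + 1 : ℕ) := by push_cast; ring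
    rw [hshift, hshift, Nat.choose_succ_succ]
    rcases Nat.lt_succ_iff_lt_or_eq.1 (mem_range.1 hj) with hlt | rfl
    · obtain ⟨r, rfl⟩ := Nat.exists_eq_add_of_lt hlt
      rw [show j + r + 1 - j = r + 1 by omega, show j + r + 1 - (j + 1) = r by omega,
        poch_succ, poch_succ]
      push_cast
      ring
    · simp [poch_zero, pow_succ]
  have hzero : poch (a + b) (n + 1) * poch (a + d) (n + 1) =
      (n + a + b) * (n + a + d) * (poch (a + b) n * poch (a + d) n) := by
    rw [poch_succ, poch_succ]; ring
  rw [hn, cdHahn_eq_sum_quadPoch, cdHahn_eq_sum_quadPoch, sum_range_succ',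
    sum_range_succ' _ (n + 1), mul_add, mul_sum, mul_sum, add_sub_right_comm, ← sum_sub_distrib]
  congr 1
  · refine sum_congr rfl fun j hj => ?_
    rw [Nat.add_sub_add_right, hcoeff j hj, quadPoch_succ_left]
    ring
  · simpa [quadPoch_zero] using hzero

lemma cdHahn_succ_shift_sub (n : ℕ) (y a b d : ℝ) :
    cdHahn (n + 1) y (a + 1) b d - cdHahn (n + 1) y a b d =
      (n + 1) * (n + b + d) * cdHahn n y (a + 1) b d := by
  induction n generalizing a with
  | zero =>
    simp only [cdHahn_succ_eq_sub_shift, cdHahn_zero]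
    push_cast
    ring
  | succ n ih =>
    have h₁ := cdHahn_succ_eq_sub_shift (n + 1) y (a + 1) b d
    have h₂ := cdHahn_succ_eq_sub_shift (n + 1) y a b d
    have h₃ := cdHahn_succ_eq_sub_shift n y (a + 1) b d
    push_cast at h₁ h₂ ⊢
    linear_combination h₁ - h₂ + (n + 1 + a + b) * (n + 1 + a + d) * ih a
      - ((a + 1) ^ 2 + y) * ih (a + 1) - (n + 1) * (n + b + d) * h₃

lemma cdHahn_succ (n : ℕ) (y a b d : ℝ) :
    cdHahn (n + 1) y a b d =
      (2 * n ^ 2 + n * (2 * a + 2 * b + 2 * d - 1) + a * b + a * d + b * d - y) *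
          cdHahn n y a b d -
        n * (n - 1 + a + b) * (n - 1 + a + d) * (n - 1 + b + d) * cdHahn (n - 1) y a b d := by
  have h₁ := cdHahn_succ_eq_sub_shift n y a b d
  cases n with
  | zero =>
    rw [h₁]
    simp only [cdHahn_zero]
    push_cast
    ring
  | succ n =>
    have h₂ := cdHahn_succ_eq_sub_shift n y a b d
    have h₃ := cdHahn_succ_shift_sub n y a b d
    rw [Nat.add_sub_cancel]
    push_cast at h₁ ⊢
    linear_combination h₁ - (a ^ 2 + y) * h₃ - (n + 1) * (n + b + d) * h₂

lemma cdHahn_swap (n : ℕ) (y a b d : ℝ) : cdHahn n y a b d = cdHahn n y d b a := by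
  induction n using Nat.strong_induction_on with
  | _ n ih =>
    cases n with
    | zero => simp only [cdHahn_zero]
    | succ n =>
      rw [cdHahn_succ, cdHahn_succ, ih n (by omega), ih (n - 1) (by omega)]
      ring

lemma cdHahn_of_add_eq_one_sub (x : ℕ) (y a b : ℝ) :
    cdHahn x y a b (1 - a - x) = (-1) ^ x * quadPoch a y x := by
  rw [cdHahn_eq_sum_quadPoch, sum_range_succ, sum_eq_zero, zero_add]
  · simp [poch_zero]
  · intro j hj
    obtain ⟨r, rfl⟩ := Nat.exists_eq_add_of_lt (mem_range.1 hj)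
    rw [show j + r + 1 - j = r + 1 by omega, poch_succ (a + (1 - a - _) + _)]
    push_cast
    ring

/-! ### Meixner polynomials -/

lemma poch_neg_add_one_succ (s : ℝ) (j : ℕ) :
    poch (-(s + 1)) (j + 1) = poch (-s) (j + 1) - (j + 1) * poch (-s) j := by
  rw [poch_succ_left, poch_succ, show -(s + 1) + 1 = -s by ring]
  ring

lemma mul_poch_neg_sub (s : ℝ) (j : ℕ) :
    s * (poch (-s) j - poch (-(s - 1)) j) = j * poch (-s) j := by
  have h := (poch_succ_left (-s) j).symm.trans (poch_succ (-s) j)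
  rw [show -(s - 1) = -s + 1 by ring]
  linear_combination h

/-- The truncation `∑_{j<L} (-s)_j (-u)_j / ((β)_j j!) t^j` of the Gauss series `₂F₁(-s, -u; β; t)`,
in which both Meixner variables may be real. -/
noncomputable def meixnerSum (L : ℕ) (β t s u : ℝ) : ℝ :=
  ∑ j ∈ range L, poch (-s) j * poch (-u) j / (poch β j * (j.factorial : ℝ)) * t ^ j

lemma meixnerSum_comm (L : ℕ) (β t s u : ℝ) : meixnerSum L β t s u = meixnerSum L β t u s := by
  simp only [meixnerSum, mul_comm (poch (-s) _)]

lemma mul_meixnerSum_sub (L : ℕ) (β t s u : ℝ) :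
    s * (meixnerSum L β t s u - meixnerSum L β t (s - 1) u) =
      u * (meixnerSum L β t s u - meixnerSum L β t s (u - 1)) := by
  simp only [meixnerSum, ← sum_sub_distrib, mul_sum]
  refine sum_congr rfl fun j _ => ?_
  linear_combination t ^ j / (poch β j * j.factorial) *
    (poch (-u) j * mul_poch_neg_sub s j - poch (-s) j * mul_poch_neg_sub u j)

lemma meixnerSum_add_one {β : ℝ} (hβ : ∀ j : ℕ, β + j ≠ 0) (L : ℕ) (t s u : ℝ) :
    (u + β) * meixnerSum (L + 1) β t s (u + 1) =
      (u + β + s) * meixnerSum (L + 1) β t s u - s * (1 - t) * meixnerSum (L + 1) β t (s - 1) u +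
        poch (-s) (L + 1) * poch (-u) L / (poch β L * (L.factorial : ℝ)) * t ^ (L + 1) := by
  induction L with
  | zero =>
    simp only [meixnerSum, zero_add, range_one, sum_singleton, poch_zero, poch_succ, pow_zero,
      pow_one, Nat.factorial_zero, Nat.cast_zero, Nat.cast_one, div_one, mul_one]
    ring
  | succ L ih =>
    set w : ℝ := t ^ (L + 1) / (poch β (L + 1) * (L + 1).factorial) with hw
    have hprev : poch (-s) (L + 1) * poch (-u) L / (poch β L * (L.factorial : ℝ)) * t ^ (L + 1) =
        poch (-s) (L + 1) * poch (-u) L * (β + L) * (L + 1) * w := by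
      have hL : poch β L ≠ 0 := poch_ne_zero hβ L
      have hβL : β + L ≠ 0 := hβ L
      rw [hw, poch_succ β, Nat.factorial_succ]
      push_cast
      field_simp
    have hs := mul_poch_neg_sub s (L + 1)
    have hP := poch_succ (-s) (L + 1)
    have hQ := poch_succ (-u) L
    rw [hprev] at ih
    rw [meixnerSum] at ih ⊢
    rw [meixnerSum, meixnerSum] at ih ⊢
    rw [sum_range_succ _ (L + 1), sum_range_succ _ (L + 1), sum_range_succ _ (L + 1),
      poch_neg_add_one_succ u]
    push_cast at hs hP ⊢
    linear_combination ih - (1 - t) * w * poch (-u) (L + 1) * hs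
      - t * w * poch (-u) (L + 1) * hP - (L + 1) * w * poch (-s) (L + 1) * hQ

/-- The Meixner polynomial `M_x(s; β, c)` at a real argument `s`. -/
noncomputable def meixnerPoly (x : ℕ) (β c s : ℝ) : ℝ := meixnerSum (x + 1) β (1 - 1 / c) x s

lemma meixnerPoly_eq_meixnerSum {x L : ℕ} (h : x < L) (β c s : ℝ) :
    meixnerPoly x β c s = meixnerSum L β (1 - 1 / c) x s :=
  sum_subset (range_mono h) fun j _ hj => by
    rw [poch_neg_natCast_eq_zero (by simpa using hj)]; simp

lemma meixner_eq_meixnerPoly (n x : ℕ) (β c : ℝ) : meixner n x β c = meixnerPoly x β c n := by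
  have h : meixner n x β c = meixnerPoly n β c x := rfl
  rw [h, meixnerPoly_eq_meixnerSum (show n < n + x + 1 by omega), meixnerSum_comm,
    meixnerPoly_eq_meixnerSum (show x < n + x + 1 by omega)]

lemma meixnerPoly_zero (β c s : ℝ) : meixnerPoly 0 β c s = 1 := by
  simp [meixnerPoly, meixnerSum, poch_zero]

lemma mul_meixnerPoly_sub (x : ℕ) (β c s : ℝ) :
    s * (meixnerPoly x β c s - meixnerPoly x β c (s - 1)) =
      x * (meixnerPoly x β c s - meixnerPoly (x - 1) β c s) := by
  have h := mul_meixnerSum_sub (x + 1) β (1 - 1 / c) x s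
  cases x with
  | zero => simpa [meixnerPoly, eq_comm] using h
  | succ x =>
    rw [Nat.cast_succ, add_sub_cancel_right, ← Nat.cast_succ] at h
    rw [meixnerPoly_eq_meixnerSum (by omega : x + 1 - 1 < x + 1 + 1)]
    exact h.symm

lemma mul_meixnerPoly_succ {β : ℝ} (hβ : ∀ j : ℕ, β + j ≠ 0) (x : ℕ) (c s : ℝ) :
    (x + β) * meixnerPoly (x + 1) β c s =
      (x + β + s) * meixnerPoly x β c s - s / c * meixnerPoly x β c (s - 1) := by
  have h := meixnerSum_add_one hβ (x + 1) (1 - 1 / c) s x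
  rw [poch_neg_natCast_eq_zero x.lt_succ_self, meixnerSum_comm, meixnerSum_comm _ _ _ s x,
    meixnerSum_comm _ _ _ (s - 1) x, ← meixnerPoly_eq_meixnerSum (by omega),
    ← meixnerPoly_eq_meixnerSum (by omega), ← Nat.cast_succ,
    ← meixnerPoly_eq_meixnerSum (by omega)] at h
  rw [h]
  ring

lemma mul_meixnerPoly_add_one {β : ℝ} (hβ : ∀ j : ℕ, β + j ≠ 0) (x : ℕ) (c s : ℝ) :
    (s + β) * meixnerPoly x β c (s + 1) =
      (s + β + x) * meixnerPoly x β c s - x / c * meixnerPoly (x - 1) β c s := by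
  have h := meixnerSum_add_one hβ x (1 - 1 / c) x s
  rw [poch_neg_natCast_eq_zero x.lt_succ_self] at h
  cases x with
  | zero => simpa [meixnerPoly] using h
  | succ x =>
    rw [Nat.cast_succ, add_sub_cancel_right, ← Nat.cast_succ,
      ← meixnerPoly_eq_meixnerSum (by omega), ← meixnerPoly_eq_meixnerSum (by omega),
      ← meixnerPoly_eq_meixnerSum (by omega)] at h
    rw [Nat.add_sub_cancel, h]
    ring

-- Bispectral duality: swapping the degree `x` with the argument `s` permutes the three recurrences
-- above.
lemma meixnerPoly_mul_meixnerPoly_bispectral {β₁ β₂ c : ℝ} (h₁ : ∀ j : ℕ, β₁ + j ≠ 0)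
    (h₂ : ∀ j : ℕ, β₂ + j ≠ 0) (hc : c ≠ 0) (x₁ x₂ : ℕ) (s₁ s₂ : ℝ) :
    (2 * s₁ * s₂ + s₂ * β₁ + s₁ * β₂) * (meixnerPoly x₁ β₁ c s₁ * meixnerPoly x₂ β₂ c s₂)
      - s₁ * s₂ / c * (meixnerPoly x₁ β₁ c (s₁ - 1) * meixnerPoly x₂ β₂ c (s₂ - 1))
      - c * (s₁ + β₁) * (s₂ + β₂) *
        (meixnerPoly x₁ β₁ c (s₁ + 1) * meixnerPoly x₂ β₂ c (s₂ + 1)) =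
    (2 * x₁ * x₂ + x₂ * β₁ + x₁ * β₂) * (meixnerPoly x₁ β₁ c s₁ * meixnerPoly x₂ β₂ c s₂)
      - x₁ * x₂ / c * (meixnerPoly (x₁ - 1) β₁ c s₁ * meixnerPoly (x₂ - 1) β₂ c s₂)
      - c * (x₁ + β₁) * (x₂ + β₂) *
        (meixnerPoly (x₁ + 1) β₁ c s₁ * meixnerPoly (x₂ + 1) β₂ c s₂) := by
  have hx₁ := mul_meixnerPoly_succ h₁ x₁ c s₁
  have hx₂ := mul_meixnerPoly_succ h₂ x₂ c s₂
  have hs₁ := mul_meixnerPoly_add_one h₁ x₁ c s₁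
  have hs₂ := mul_meixnerPoly_add_one h₂ x₂ c s₂
  have hd₁ : s₁ * meixnerPoly x₁ β₁ c (s₁ - 1) = (s₁ - x₁) * meixnerPoly x₁ β₁ c s₁ +
      x₁ * meixnerPoly (x₁ - 1) β₁ c s₁ := by linear_combination -mul_meixnerPoly_sub x₁ β₁ c s₁
  have hd₂ : s₂ * meixnerPoly x₂ β₂ c (s₂ - 1) = (s₂ - x₂) * meixnerPoly x₂ β₂ c s₂ +
      x₂ * meixnerPoly (x₂ - 1) β₂ c s₂ := by linear_combination -mul_meixnerPoly_sub x₂ β₂ c s₂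
  rw [div_mul_eq_mul_div, hd₁] at hx₁
  rw [div_mul_eq_mul_div, hd₂] at hx₂
  have hdown : s₁ * s₂ / c * (meixnerPoly x₁ β₁ c (s₁ - 1) * meixnerPoly x₂ β₂ c (s₂ - 1)) =
      (s₁ * meixnerPoly x₁ β₁ c (s₁ - 1)) * (s₂ * meixnerPoly x₂ β₂ c (s₂ - 1)) / c := by ring
  rw [mul_assoc c, mul_assoc c, mul_assoc c, mul_assoc c, mul_mul_mul_comm (s₁ + β₁),
    mul_mul_mul_comm (x₁ + β₁), hdown, hx₁, hx₂, hs₁, hs₂, hd₁, hd₂]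
  field_simp
  ring

/-! ### Subexponential sequences -/

/-- A real sequence is subexponential when it is `O(ρⁿ)` for every `ρ > 1`. Multiplied by such a
sequence, a geometric series keeps its radius of convergence. -/
def IsSubexponential (f : ℕ → ℝ) : Prop := ∀ ρ : ℝ, 1 < ρ → f =O[atTop] fun n : ℕ => ρ ^ n

namespace IsSubexponential

variable {f g : ℕ → ℝ} {c : ℝ}

lemma natCast_pow (k : ℕ) : IsSubexponential fun n => (n : ℝ) ^ k := fun _ hρ =>
  (isLittleO_pow_const_const_pow_of_one_lt k hρ).isBigO

lemma const (k : ℝ) : IsSubexponential fun _ => k := fun ρ hρ => by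
  simpa using (natCast_pow 0 ρ hρ).const_mul_left k

lemma natCast : IsSubexponential fun n => (n : ℝ) := by
  simpa using natCast_pow 1

lemma add (hf : IsSubexponential f) (hg : IsSubexponential g) :
    IsSubexponential fun n => f n + g n := fun ρ hρ => (hf ρ hρ).add (hg ρ hρ)

lemma sum {ι : Type*} {s : Finset ι} {f : ι → ℕ → ℝ} (hf : ∀ i ∈ s, IsSubexponential (f i)) :
    IsSubexponential fun n => ∑ i ∈ s, f i n := fun ρ hρ =>
  IsBigO.fun_sum fun i hi => hf i hi ρ hρ

lemma mul (hf : IsSubexponential f) (hg : IsSubexponential g) :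
    IsSubexponential fun n => f n * g n := fun ρ hρ => by
  have hsqrt : 1 < √ρ := Real.lt_sqrt_of_sq_lt (by simpa using hρ)
  simpa [← mul_pow, Real.mul_self_sqrt (zero_le_one.trans hρ.le)] using
    (hf _ hsqrt).mul (hg _ hsqrt)

lemma neg_one_pow_mul (hf : IsSubexponential f) : IsSubexponential fun n => (-1) ^ n * f n :=
  fun ρ hρ => by simpa [isBigO_iff] using hf ρ hρ

lemma of_tendsto_ratio {r : ℕ → ℝ} (hf : ∀ᶠ n in atTop, f (n + 1) = r n * f n)
    (hr : Tendsto r atTop (𝓝 1)) : IsSubexponential f := fun ρ hρ => by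
  obtain ⟨σ, hσ, hσρ⟩ := exists_between hρ
  have hρ0 : 0 < ρ := zero_lt_one.trans hρ
  have hsum : Summable fun n => f n / ρ ^ n := by
    refine summable_of_ratio_norm_eventually_le (r := σ / ρ) ((div_lt_one hρ0).2 hσρ) ?_
    filter_upwards [hf, hr.norm.eventually_lt_const (by simpa using hσ)] with n hn hrn
    rw [hn, pow_succ', mul_div_mul_comm, norm_mul, norm_div, Real.norm_of_nonneg hρ0.le]
    gcongr
  simpa [div_mul_cancel₀ _ (pow_pos hρ0 _).ne'] using
    (hsum.tendsto_atTop_zero.isBigO_one ℝ).mul (isBigO_refl (fun n : ℕ => ρ ^ n) atTop)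

lemma isBigO_mul_pow (hf : IsSubexponential f) {ρ : ℝ} (hcρ : |c| < ρ) :
    (fun n => f n * c ^ n) =O[atTop] fun n : ℕ => ρ ^ n := by
  obtain ⟨t, hct, htρ⟩ := exists_between hcρ
  have ht : 0 < t := (abs_nonneg c).trans_lt hct
  have hc : (fun n : ℕ => c ^ n) =O[atTop] fun n : ℕ => t ^ n :=
    IsBigO.of_bound' <| .of_forall fun n => by
      simpa [abs_of_pos ht] using pow_le_pow_left₀ (abs_nonneg c) hct.le n
  simpa [← mul_pow, div_mul_cancel₀ _ ht.ne'] using (hf _ ((one_lt_div ht).2 htρ)).mul hc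

lemma summable_mul_pow (hf : IsSubexponential f) (hc : |c| < 1) :
    Summable fun n => f n * c ^ n := by
  obtain ⟨ρ, hcρ, hρ⟩ := exists_between hc
  exact summable_of_isBigO_nat
    (summable_geometric_of_lt_one ((abs_nonneg c).trans hcρ.le) hρ) (hf.isBigO_mul_pow hcρ)

lemma exists_bound (hf : IsSubexponential f) {ρ : ℝ} (hcρ : |c| < ρ) :
    ∃ K > 0, ∀ n, |f n * c ^ n| ≤ K * ρ ^ n := by
  have hρ : 0 < ρ := (abs_nonneg c).trans_lt hcρ
  obtain ⟨K, hK, h⟩ := bound_of_isBigO_nat_atTop (hf.isBigO_mul_pow hcρ)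
  exact ⟨K, hK, fun n => by simpa [abs_of_pos hρ] using h (pow_pos hρ n).ne'⟩

end IsSubexponential

lemma isSubexponential_poch_div_factorial (α : ℝ) :
    IsSubexponential fun r => poch α r / (r.factorial : ℝ) := by
  refine .of_tendsto_ratio (r := fun r : ℕ => (α + 1 * r) / (1 + 1 * r)) (.of_forall fun r => ?_)
    (by simpa using tendsto_add_mul_div_add_mul_atTop_nhds α 1 (1 : ℝ) one_ne_zero)
  have hr : (1 : ℝ) + r ≠ 0 := by positivity
  rw [poch_succ, Nat.factorial_succ, one_mul]
  push_cast
  field_simp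
  ring

lemma isSubexponential_poch_neg_add (u : ℝ) (j : ℕ) :
    IsSubexponential fun n => poch (-(u + n)) j := by
  induction j with
  | zero => simpa [poch_zero] using IsSubexponential.const 1
  | succ j ih =>
    simp only [poch_succ]
    refine ih.mul ?_
    convert (IsSubexponential.const (j - u)).add ((IsSubexponential.const (-1)).mul .natCast)
      using 2
    ring

lemma isSubexponential_meixnerPoly (x : ℕ) (β c u : ℝ) :
    IsSubexponential fun n => meixnerPoly x β c (u + n) := by
  unfold meixnerPoly meixnerSum
  refine .sum fun j _ => ?_
  simp only [mul_div_assoc, mul_assoc, div_mul_eq_mul_div]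
  exact (IsSubexponential.const _).mul ((isSubexponential_poch_neg_add u j).mul (.const _))

/-! ### Binomial transforms -/

lemma hasSum_poch_div_factorial_mul_pow (α : ℝ) {c : ℝ} (hc : |c| < 1) :
    HasSum (fun r : ℕ => poch α r / (r.factorial : ℝ) * c ^ r) ((1 - c) ^ (-α)) := by
  have h := (Real.one_div_one_sub_rpow_hasFPowerSeriesOnBall_zero α).hasSum (y := c)
    (by simpa [enorm_eq_nnnorm, ← NNReal.coe_lt_one] using hc)
  simp only [FormalMultilinearSeries.ofScalars_apply_eq, zero_add, smul_eq_mul] at h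
  have hpoch (r : ℕ) : poch α r = (ascPochhammer ℝ r).eval α := by
    induction r with
    | zero => simp [poch_zero]
    | succ r ih => rw [poch_succ, ih, ascPochhammer_succ_eval]
  rw [Real.rpow_neg (by linarith [(abs_lt.1 hc).2]), ← one_div]
  refine h.congr_fun fun r => ?_
  rw [hpoch, ← Polynomial.ascPochhammer_smeval_eq_eval,
    ← Ring.factorial_nsmul_multichoose_eq_ascPochhammer, nsmul_eq_mul,
    mul_div_cancel_left₀ _ (by positivity), Ring.choose, show α + r - 1 - r + 1 = α by ring]

lemma hasSum_succ_sub {f : ℕ → ℝ} (hf : Summable f) :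
    HasSum (fun n => f (n + 1) - f n) (-f 0) := by
  simpa using ((hasSum_nat_add_iff' 1).2 hf.hasSum).sub hf.hasSum

lemma meixnerPoly_weighted_succ_sub {β c : ℝ} (hβ : ∀ j : ℕ, β + j ≠ 0) (hc0 : c ≠ 0) (u : ℝ)
    (x r : ℕ) :
    poch (β + u) (r + 1) / ((r + 1).factorial : ℝ) * c ^ (r + 1) *
        ((r + 1 : ℕ) * meixnerPoly x β c (u + (r + 1 : ℕ))) -
      poch (β + u) r / (r.factorial : ℝ) * c ^ r * (r * meixnerPoly x β c (u + r)) =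
    poch (β + u) r / (r.factorial : ℝ) * c ^ r *
      (c * (x + β) * meixnerPoly (x + 1) β c (u + r) + (u - x) * meixnerPoly x β c (u + r)) := by
  have hdegree := mul_meixnerPoly_succ hβ x c (u + r)
  have hargument := mul_meixnerPoly_add_one hβ x c (u + r)
  have hshift := mul_meixnerPoly_sub x β c (u + r)
  have hsucc : poch (β + u) (r + 1) / ((r + 1).factorial : ℝ) * c ^ (r + 1) *
      ((r + 1 : ℕ) * meixnerPoly x β c (u + (r + 1 : ℕ))) =
      poch (β + u) r / (r.factorial : ℝ) * c ^ r *
        (c * ((u + r + β) * meixnerPoly x β c (u + r + 1))) := by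
    rw [poch_succ, Nat.factorial_succ, pow_succ, Nat.cast_succ, ← add_assoc]
    push_cast
    field_simp
    ring
  rw [hsucc, hargument, mul_assoc c, hdegree]
  field_simp
  linear_combination -poch (β + u) r * hshift

-- The sum for `x + 1` differs from a multiple of the sum for `x` by a telescoping series.
lemma hasSum_meixnerPoly {β c : ℝ} (hβ : ∀ j : ℕ, β + j ≠ 0) (hc0 : c ≠ 0) (hc : |c| < 1)
    (u : ℝ) (x : ℕ) :
    HasSum (fun r : ℕ => poch (β + u) r / (r.factorial : ℝ) * c ^ r * meixnerPoly x β c (u + r))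
      (poch (-u) x / (c ^ x * poch β x) * (1 - c) ^ (-(β + u))) := by
  induction x with
  | zero => simpa [meixnerPoly_zero, poch_zero] using hasSum_poch_div_factorial_mul_pow (β + u) hc
  | succ x ih =>
    have hsummable : Summable fun r : ℕ =>
        poch (β + u) r / (r.factorial : ℝ) * c ^ r * (r * meixnerPoly x β c (u + r)) := by
      simpa only [mul_assoc, mul_left_comm, mul_comm] using
        (((isSubexponential_poch_div_factorial (β + u)).mul .natCast).mul
        (isSubexponential_meixnerPoly x β c u)).summable_mul_pow hc
    have htelescope := hasSum_succ_sub hsummable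
    simp only [meixnerPoly_weighted_succ_sub hβ hc0] at htelescope
    have hβx : (x : ℝ) + β ≠ 0 := add_comm β x ▸ hβ x
    have hval : poch (-u) (x + 1) / (c ^ (x + 1) * poch β (x + 1)) * (1 - c) ^ (-(β + u)) =
        1 / (c * (x + β)) *
          (0 - (u - x) * (poch (-u) x / (c ^ x * poch β x) * (1 - c) ^ (-(β + u)))) := by
      rw [poch_succ, poch_succ, add_comm β x]
      have := poch_ne_zero hβ x
      field_simp
      ring
    rw [hval]
    simp only [Nat.cast_zero, zero_mul, mul_zero, neg_zero] at htelescope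
    refine ((htelescope.sub (ih.mul_left (u - x))).mul_left _).congr_fun fun r => ?_
    field_simp
    ring

/-- The coefficients of `∑_j a_j zʲ (1 - z)^(-α - j)` as a power series in `z`. -/
noncomputable def binomTransform (a : ℕ → ℝ) (α : ℝ) (n : ℕ) : ℝ :=
  ∑ q ∈ antidiagonal n, a q.1 * (poch (α + q.1) q.2 / (q.2.factorial : ℝ))

section binomTransform

variable {a m : ℕ → ℝ} {c : ℝ}

lemma summable_prod_of_isSubexponential (ha : IsSubexponential a) (hm : IsSubexponential m)
    (hc : |c| < 1 / 2) (α : ℝ) :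
    Summable fun q : ℕ × ℕ => a q.1 * (poch (α + q.1) q.2 / (q.2.factorial : ℝ)) *
      (m (q.1 + q.2) * c ^ (q.1 + q.2)) := by
  obtain ⟨ρ, hcρ, hρ⟩ := exists_between hc
  obtain ⟨K, hK, hbound⟩ := hm.exists_bound hcρ
  have hρ0 : 0 < ρ := (abs_nonneg c).trans_lt hcρ
  have hρ1 : 0 < 1 - ρ := by linarith
  set B : ℕ × ℕ → ℝ := fun q => |a q.1| * (poch (|α| + q.1) q.2 / (q.2.factorial : ℝ)) *
    (K * ρ ^ (q.1 + q.2)) with hB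
  have hpoch (q : ℕ × ℕ) : 0 ≤ poch (|α| + q.1) q.2 := poch_nonneg (by positivity) _
  have hrow (j : ℕ) : HasSum (fun r => B (j, r))
      (K * (1 - ρ) ^ (-|α|) * (|a j| * (ρ / (1 - ρ)) ^ j)) := by
    have hval : K * (1 - ρ) ^ (-|α|) * (|a j| * (ρ / (1 - ρ)) ^ j) =
        K * |a j| * ρ ^ j * (1 - ρ) ^ (-(|α| + j)) := by
      rw [neg_add, Real.rpow_add hρ1, Real.rpow_neg hρ1.le j, Real.rpow_natCast, div_pow]
      ring
    have hρ' : |ρ| < 1 := by rw [abs_of_pos hρ0]; linarith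
    rw [hval]
    refine ((hasSum_poch_div_factorial_mul_pow (|α| + j) hρ').mul_left _).congr_fun fun r => ?_
    simp only [hB, pow_add]
    ring
  have hBsum : Summable B := by
    refine (summable_prod_of_nonneg fun q => ?_).2 ⟨fun j => (hrow j).summable, ?_⟩
    · have := hpoch q
      positivity
    · simp only [(hrow _).tsum_eq]
      have hz : |ρ / (1 - ρ)| < 1 := by
        rw [abs_of_pos (by positivity), div_lt_one hρ1]
        linarith
      simpa [abs_mul, abs_div, abs_of_pos hρ0, abs_of_pos hρ1] using
        ((ha.summable_mul_pow hz).abs).mul_left (K * (1 - ρ) ^ (-|α|))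
  refine hBsum.of_norm_bounded fun q => ?_
  rw [Real.norm_eq_abs, abs_mul, abs_mul, abs_div, Nat.abs_cast]
  have := hpoch q
  simp only [hB]
  gcongr
  · exact abs_poch_le_poch ((abs_add_le _ _).trans_eq (by rw [Nat.abs_cast])) _
  · exact hbound _

lemma hasSum_binomTransform_mul (ha : IsSubexponential a) (hm : IsSubexponential m)
    (hc : |c| < 1 / 2) (α : ℝ) :
    HasSum (fun n => binomTransform a α n * c ^ n * m n)
      (∑' q : ℕ × ℕ, a q.1 * (poch (α + q.1) q.2 / (q.2.factorial : ℝ)) *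
        (m (q.1 + q.2) * c ^ (q.1 + q.2))) := by
  have h := (HasAntidiagonal.sigmaAntidiagonalEquivProd (A := ℕ)).hasSum_iff.2
    (summable_prod_of_isSubexponential ha hm hc α).hasSum
  refine (h.sigma fun n => hasSum_fintype _).congr_fun fun n => ?_
  simp only [Function.comp, HasAntidiagonal.sigmaAntidiagonalEquivProd_apply]
  rw [sum_coe_sort (antidiagonal n) fun q : ℕ × ℕ => a q.1 *
      (poch (α + q.1) q.2 / (q.2.factorial : ℝ)) * (m (q.1 + q.2) * c ^ (q.1 + q.2)),
    binomTransform, mul_assoc, sum_mul]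
  refine sum_congr rfl fun q hq => ?_
  rw [mem_antidiagonal.1 hq, mul_comm (m n)]

lemma tsum_binomTransform_mul (ha : IsSubexponential a) (hm : IsSubexponential m)
    (hc : |c| < 1 / 2) {α : ℝ} {T : ℕ → ℝ}
    (hT : ∀ j : ℕ, HasSum (fun r : ℕ => poch (α + j) r / (r.factorial : ℝ) * c ^ r * m (j + r))
      (T j)) :
    ∑' n, binomTransform a α n * c ^ n * m n = ∑' j, a j * c ^ j * T j := by
  rw [(hasSum_binomTransform_mul ha hm hc α).tsum_eq]
  refine ((summable_prod_of_isSubexponential ha hm hc α).hasSum.prod_fiberwise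
    fun j => ?_).tsum_eq.symm
  refine ((hT j).mul_left (a j * c ^ j)).congr_fun fun r => ?_
  rw [pow_add]
  ring

lemma tsum_binomTransform_mul_meixnerPoly {β : ℝ} (hβ : ∀ j : ℕ, β + j ≠ 0) (hc0 : c ≠ 0)
    (hc : |c| < 1 / 2) (ha : IsSubexponential a) (u : ℝ) (x : ℕ) :
    ∑' n, binomTransform a (β + u) n * c ^ n * meixnerPoly x β c (u + n) =
      (1 - c) ^ (-(β + u)) / (c ^ x * poch β x) *
        ∑' j : ℕ, a j * poch (-(u + j)) x * (c / (1 - c)) ^ j := by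
  have hc1 : 0 < 1 - c := by linarith [(abs_lt.1 hc).2]
  rw [tsum_binomTransform_mul ha (isSubexponential_meixnerPoly x β c u) hc
    (T := fun j => poch (-(u + j)) x / (c ^ x * poch β x) * (1 - c) ^ (-(β + (u + j)))),
    ← tsum_mul_left]
  · refine tsum_congr fun j => ?_
    rw [← add_assoc β, neg_add (β + u), Real.rpow_add hc1, Real.rpow_neg hc1.le j,
      Real.rpow_natCast, div_pow]
    ring
  · intro j
    simpa only [Nat.cast_add, add_assoc] using
      hasSum_meixnerPoly hβ hc0 (hc.trans (by norm_num)) (u + j) x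

end binomTransform

/-! ### The regularized Gauss series -/

/-- The Taylor coefficients at `0` of the regularized Gauss series
`₂F₁(q + i√y, q - i√y; γ; z) / Γ(γ)`. Division by zero gives the intended value `1 / Γ = 0` at the
poles of `Γ`, because Mathlib sets `Γ = 0` there. -/
noncomputable def gaussCoeff (q y γ : ℝ) (m : ℕ) : ℝ :=
  quadPoch q y m / ((m.factorial : ℝ) * Real.Gamma (γ + m))

/-- The regularized Gauss series `₂F₁(q + i√y, q - i√y; γ; z) / Γ(γ)`. -/
noncomputable def regGauss (q y γ z : ℝ) : ℝ := ∑' m, gaussCoeff q y γ m * z ^ m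

lemma isSubexponential_gaussCoeff (q y γ : ℝ) : IsSubexponential (gaussCoeff q y γ) := by
  have htendsto (s t κ : ℝ) : Tendsto (fun m : ℕ => (s + κ * m) / (t + 1 * m)) atTop (𝓝 κ) := by
    simpa using tendsto_add_mul_div_add_mul_atTop_nhds s t κ one_ne_zero
  have hratio := ((htendsto q 1 1).mul (htendsto q γ 1)).add
    ((htendsto y 1 0).mul (htendsto 1 γ 0))
  simp only [mul_one, add_zero, one_mul, zero_mul] at hratio
  refine .of_tendsto_ratio ?_ hratio
  filter_upwards [tendsto_natCast_atTop_atTop.eventually_gt_atTop (-γ)] with m hm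
  have hγ : γ + m ≠ 0 := by linarith
  have hm1 : (m : ℝ) + 1 ≠ 0 := by positivity
  rw [gaussCoeff, gaussCoeff, quadPoch_succ, Nat.factorial_succ, Nat.cast_succ m, ← add_assoc,
    Real.Gamma_add_one hγ]
  push_cast
  simp only [div_eq_mul_inv, mul_inv, add_comm (1 : ℝ) m]
  field_simp

lemma summable_gaussCoeff_mul_pow (q y γ : ℝ) {z : ℝ} (hz : |z| < 1) :
    Summable fun m => gaussCoeff q y γ m * z ^ m :=
  (isSubexponential_gaussCoeff q y γ).summable_mul_pow hz

lemma factorial_div_mul_gaussCoeff (q y γ : ℝ) (x m : ℕ) :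
    ((x + m).factorial : ℝ) / m.factorial * gaussCoeff q y γ (x + m) =
      quadPoch q y x * gaussCoeff (q + x) y (γ + x) m := by
  rw [gaussCoeff, gaussCoeff, quadPoch_add, Nat.cast_add, ← add_assoc]
  simp only [div_eq_mul_inv, mul_inv]
  field_simp

-- Up to sign this is `zˣ` times the `x`-th derivative of the Gauss series.
lemma tsum_poch_neg_mul_gaussCoeff (q y γ z : ℝ) (x : ℕ) :
    ∑' j : ℕ, poch (-(j : ℝ)) x * (gaussCoeff q y γ j * z ^ j) =
      (-z) ^ x * quadPoch q y x * regGauss (q + x) y (γ + x) z := by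
  have hsupport : Function.support (fun j : ℕ => poch (-(j : ℝ)) x * (gaussCoeff q y γ j * z ^ j)) ⊆
      Set.range (x + ·) := fun j hj => by
    have hxj : x ≤ j := by
      by_contra! hlt
      exact hj (by simp only [poch_neg_natCast_eq_zero hlt, zero_mul])
    exact ⟨j - x, Nat.add_sub_cancel' hxj⟩
  rw [← (add_right_injective x).tsum_eq hsupport, regGauss, ← tsum_mul_left]
  refine tsum_congr fun m => ?_
  have hpoch : poch (-((x + m : ℕ) : ℝ)) x = (-1) ^ x * ((x + m).factorial / m.factorial) := by
    have := factorial_mul_poch_neg_natCast_add x m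
    field_simp
    linear_combination this
  rw [hpoch, neg_pow z, pow_add]
  linear_combination (-1) ^ x * z ^ x * z ^ m * factorial_div_mul_gaussCoeff q y γ x m

lemma poch_neg_mul_gaussCoeff_add_one (q y p : ℝ) (x j : ℕ) :
    poch (-(p + j)) x * gaussCoeff q y (p + 1) j = (-1) ^ x * gaussCoeff q y (p + 1 - x) j := by
  have h := poch_neg_mul_inv_Gamma_add_one (p + j) x
  rw [show p + j + 1 = p + 1 + j by ring, show p + 1 + (j : ℝ) - x = p + 1 - x + j by ring] at h
  rw [gaussCoeff, gaussCoeff, div_eq_mul_inv, div_eq_mul_inv, mul_inv, mul_inv]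
  linear_combination quadPoch q y j * (j.factorial : ℝ)⁻¹ * h

/-! ### Generating functions of continuous dual Hahn polynomials -/

/-- The continuous dual Hahn polynomial `S_n(y; a, b, d)` divided by `n! Γ(a + d + n)`, with
`1 / Γ = 0` at the poles of `Γ`. -/
noncomputable def cdHahnReg (y a b d : ℝ) (n : ℕ) : ℝ :=
  cdHahn n y a b d / ((n.factorial : ℝ) * Real.Gamma (a + d + n))

lemma cdHahnReg_swap (y a b d : ℝ) : cdHahnReg y a b d = cdHahnReg y d b a := by
  ext n
  rw [cdHahnReg, cdHahnReg, cdHahn_swap, add_comm a d]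

lemma cdHahnReg_eq_binomTransform (y a b d : ℝ) :
    cdHahnReg y a b d = binomTransform (fun j => (-1) ^ j * gaussCoeff a y (a + d) j) (a + b) := by
  ext n
  rw [binomTransform, Nat.sum_antidiagonal_eq_sum_range_succ_mk, cdHahnReg,
    cdHahn_eq_sum_quadPoch, sum_div]
  refine sum_congr rfl fun j hj => ?_
  obtain ⟨r, rfl⟩ := Nat.exists_eq_add_of_le (mem_range_succ_iff.1 hj)
  have hΓ := poch_mul_inv_Gamma_add (a + d + j) r
  rw [Nat.add_sub_cancel_left, gaussCoeff, div_eq_mul_inv, div_eq_mul_inv, mul_inv, mul_inv, ← hΓ,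
    Nat.cast_choose ℝ (Nat.le_add_right j r), Nat.add_sub_cancel_left, Nat.cast_add, ← add_assoc]
  field_simp

section

variable {c : ℝ}

lemma tsum_cdHahnReg_mul_meixnerPoly (hc0 : c ≠ 0) (hc : |c| < 1 / 2) {β : ℝ}
    (hβ : ∀ j : ℕ, β + j ≠ 0) (y : ℝ) {a b u : ℝ} (hab : a + b = β + u) (d : ℝ) (x : ℕ) :
    ∑' n, cdHahnReg y a b d n * c ^ n * meixnerPoly x β c (u + n) =
      (1 - c) ^ (-(a + b)) / (c ^ x * poch β x) *
        ∑' j : ℕ, poch (-(u + j)) x * (gaussCoeff a y (a + d) j * (c / (c - 1)) ^ j) := by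
  rw [cdHahnReg_eq_binomTransform, hab, tsum_binomTransform_mul_meixnerPoly hβ hc0 hc
    (isSubexponential_gaussCoeff a y (a + d)).neg_one_pow_mul]
  congr 1
  refine tsum_congr fun j => ?_
  rw [← neg_sub 1 c, div_neg, neg_pow (c / _)]
  ring

-- Both sides arise from the generating function of `S_n(y; a, b, d) / (n! Γ(a + d + n))`, which is
-- symmetric in `a` and `d`.
lemma regGauss_euler (hc0 : c ≠ 0) (hc : |c| < 1 / 2) (y a d : ℝ) :
    regGauss a y (a + d) (c / (c - 1)) =
      (1 - c) ^ (a - d) * regGauss d y (a + d) (c / (c - 1)) := by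
  have h1 : 0 < 1 - c := by linarith [(abs_lt.1 hc).2]
  have hgen (a d : ℝ) : ∑' n, cdHahnReg y a 0 d n * c ^ n =
      (1 - c) ^ (-a) * regGauss a y (a + d) (c / (c - 1)) := by
    simpa [meixnerPoly_zero, poch_zero, regGauss] using
      tsum_cdHahnReg_mul_meixnerPoly hc0 hc (β := 1) (fun j => by positivity) y
        (show a + 0 = 1 + (a - 1) by ring) d 0
  have h := hgen a d
  rw [cdHahnReg_swap, hgen d a, add_comm d a] at h
  have hexp : (1 - c) ^ a * (1 - c) ^ (-a) = 1 := by rw [← Real.rpow_add h1]; simp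
  rw [sub_eq_add_neg a, Real.rpow_add h1, mul_assoc, h, ← mul_assoc, hexp, one_mul]

lemma tsum_cdHahnReg_mul_meixnerPoly_natCast (hc0 : c ≠ 0) (hc : |c| < 1 / 2) {a b : ℝ}
    (hab : ∀ j : ℕ, a + b + j ≠ 0) (y d : ℝ) (x : ℕ) :
    (1 - c) ^ (b + d) * poch (a + b) x *
        ∑' n, cdHahnReg y a b d n * c ^ n * meixnerPoly x (a + b) c n =
      quadPoch a y x * regGauss d y (a + d + x) (c / (c - 1)) := by
  have h1 : 0 < 1 - c := by linarith [(abs_lt.1 hc).2]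
  have hsum := tsum_cdHahnReg_mul_meixnerPoly hc0 hc hab y (add_zero (a + b)).symm d x
  have heuler := regGauss_euler hc0 hc y (a + x) d
  have hpoch := poch_ne_zero hab x
  have hexp : (1 - c) ^ (b + d) * (1 - c) ^ (-(a + b)) * (1 - c) ^ (a + x - d) =
      (1 - c) ^ x := by
    rw [← Real.rpow_add h1, ← Real.rpow_add h1, ← Real.rpow_natCast]
    ring_nf
  have hz : (-(c / (c - 1))) ^ x = c ^ x / (1 - c) ^ x := by
    rw [← div_pow, ← neg_sub 1 c, div_neg, neg_neg]
  simp only [zero_add] at hsum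
  rw [hsum, tsum_poch_neg_mul_gaussCoeff, add_right_comm a d, heuler, hz]
  have hx := (pow_pos h1 x).ne'
  field_simp
  linear_combination quadPoch a y x * regGauss d y (a + x + d) (c / (c - 1)) * hexp

lemma tsum_cdHahnReg_mul_meixnerPoly_add (hc0 : c ≠ 0) (hc : |c| < 1 / 2) {a b p β : ℝ}
    (hβ : ∀ j : ℕ, β + j ≠ 0) (y : ℝ) {d : ℝ} (had : a + d = p + 1) (hbd : b + d = β + p) (x : ℕ) :
    (-1) ^ x * c ^ x * (1 - c) ^ (b + d) * poch β x *
        ∑' n, cdHahnReg y a b d n * c ^ n * meixnerPoly x β c (p + n) =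
      regGauss d y (p + 1 - x) (c / (c - 1)) := by
  have h1 : 0 < 1 - c := by linarith [(abs_lt.1 hc).2]
  have hpoch := poch_ne_zero hβ x
  have hpow := (Real.rpow_pos_of_pos h1 (b + d)).ne'
  have hsign : (-1 : ℝ) ^ x * (-1) ^ x = 1 := by rw [← mul_pow]; simp
  rw [cdHahnReg_swap, tsum_cdHahnReg_mul_meixnerPoly hc0 hc hβ y (by rw [add_comm d, hbd]) a,
    add_comm d a, had, add_comm d b, Real.rpow_neg h1.le]
  simp only [← mul_assoc, poch_neg_mul_gaussCoeff_add_one]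
  simp only [mul_assoc, tsum_mul_left]
  rw [← regGauss]
  field_simp
  linear_combination regGauss d y (p + 1 - x) (c / (c - 1)) * hsign

end

lemma cdHahnReg_one (y a b d : ℝ) :
    (a + d) * cdHahnReg y a b d 1 = (a * b + a * d + b * d - y) * cdHahnReg y a b d 0 := by
  have hΓ := inv_Gamma_eq_mul_inv_Gamma_add_one (a + d)
  have hS := cdHahn_succ 0 y a b d
  simp only [zero_add, Nat.cast_zero, zero_mul, sub_zero] at hS
  simp only [cdHahnReg, hS, div_eq_mul_inv, mul_inv, Nat.cast_zero, Nat.cast_one, add_zero, hΓ,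
    Nat.factorial_zero, Nat.factorial_one]
  ring

lemma cdHahnReg_add_two (y a b d : ℝ) (n : ℕ) :
    (n + 2) * (n + 1 + a + d) * cdHahnReg y a b d (n + 2) =
      (2 * (n + 1) ^ 2 + (n + 1) * (2 * a + 2 * b + 2 * d - 1) + a * b + a * d + b * d - y) *
          cdHahnReg y a b d (n + 1) -
        (n + a + b) * (n + b + d) * cdHahnReg y a b d n := by
  have hΓ₁ := inv_Gamma_eq_mul_inv_Gamma_add_one (a + d + n)
  have hΓ₂ := inv_Gamma_eq_mul_inv_Gamma_add_one (a + d + (n + 1))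
  have hS := cdHahn_succ (n + 1) y a b d
  rw [Nat.add_sub_cancel] at hS
  simp only [cdHahnReg, hS, div_eq_mul_inv, mul_inv, Nat.factorial_succ]
  push_cast
  rw [hΓ₁, show a + d + ((n : ℝ) + 2) = a + d + (n + 1) + 1 by ring,
    show a + d + (n : ℝ) + 1 = a + d + (n + 1) by ring, hΓ₂]
  field_simp
  ring

lemma summable_cdHahnReg_mul {c : ℝ} {m : ℕ → ℝ} (hm : IsSubexponential m) (hc : |c| < 1 / 2)
    (y a b d : ℝ) : Summable fun n => cdHahnReg y a b d n * c ^ n * m n := by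
  rw [cdHahnReg_eq_binomTransform]
  exact (hasSum_binomTransform_mul (isSubexponential_gaussCoeff a y (a + d)).neg_one_pow_mul hm hc
    (a + b)).summable

/-! ### The bilinear pairing -/

-- Summation by parts: the hypotheses say that a second order difference operator annihilates the
-- sequence against which the operator with entries `X`, `Z`, `Y` is paired.
lemma hasSum_add_add_of_shifted_add_eq_zero {X Y Z : ℕ → ℝ} (hX : Summable X) (hY : Summable Y)
    (hX0 : X 0 = 0) (hZ0 : Z 0 + X 1 = 0) (hZ : ∀ n, Y n + Z (n + 1) + X (n + 2) = 0) :
    HasSum (fun n => X n + Z n + Y n) 0 := by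
  have hXZ : HasSum (fun n => X (n + 1) + Z n) (-∑' n, Y n) := by
    refine (hasSum_nat_add_iff' 1).1 ?_
    simp only [sum_range_one, zero_add, add_comm (X 1), hZ0, sub_zero]
    exact hY.hasSum.neg.congr_fun fun n => by linear_combination hZ n
  have h := (hXZ.sub (hasSum_succ_sub hX)).add hY.hasSum
  rw [hX0, neg_zero, sub_zero, neg_add_cancel] at h
  exact h.congr_fun fun n => by ring

lemma isSubexponential_meixnerPoly_mul (x₁ x₂ : ℕ) (β₁ β₂ c u v : ℝ) :
    IsSubexponential fun n => meixnerPoly x₁ β₁ c (u + n) * meixnerPoly x₂ β₂ c (v + n) :=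
  (isSubexponential_meixnerPoly x₁ β₁ c u).mul (isSubexponential_meixnerPoly x₂ β₂ c v)

/-- The sum `∑_n cⁿ S_n M_{x₁}(p + n) M_{x₂}(n) / (n! Γ(p + 1 + n))` of products of two Meixner
polynomials, with parameters `b + 1 - a` and `a + b`, weighted by the continuous dual Hahn
polynomials `S_n(y; a, b, 1 - a + p)`. -/
noncomputable def meixnerPairing (y a b c p : ℝ) (x₁ x₂ : ℕ) : ℝ :=
  ∑' n : ℕ, cdHahnReg y a b (1 - a + p) n * c ^ n *
    (meixnerPoly x₁ (b + 1 - a) c (p + n) * meixnerPoly x₂ (a + b) c n)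

section meixnerPairing

variable {a b c : ℝ}

lemma summable_meixnerPairing (hc : |c| < 1 / 2) (y a b p : ℝ) (x₁ x₂ : ℕ) :
    Summable fun n : ℕ => cdHahnReg y a b (1 - a + p) n * c ^ n *
      (meixnerPoly x₁ (b + 1 - a) c (p + n) * meixnerPoly x₂ (a + b) c n) := by
  simpa only [zero_add] using summable_cdHahnReg_mul
    (isSubexponential_meixnerPoly_mul x₁ x₂ (b + 1 - a) (a + b) c p 0) hc y a b (1 - a + p)

lemma hasSum_cdHahnReg_mul_meixner_operator (hc0 : c ≠ 0) (hc : |c| < 1 / 2) (y a b p : ℝ)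
    (x₁ x₂ : ℕ) {β₁ β₂ : ℝ} (hβ₁ : β₁ = b + 1 - a) (hβ₂ : β₂ = a + b) :
    HasSum (fun n : ℕ => cdHahnReg y a b (1 - a + p) n * c ^ n *
      ((2 * (p + n) * n + n * β₁ + (p + n) * β₂ + (a * b + (a + b) * (1 - a) - y)) *
          (meixnerPoly x₁ β₁ c (p + n) * meixnerPoly x₂ β₂ c n) -
        (p + n) * n / c *
          (meixnerPoly x₁ β₁ c (p + n - 1) * meixnerPoly x₂ β₂ c (n - 1)) -
        c * (p + n + β₁) * (n + β₂) *
          (meixnerPoly x₁ β₁ c (p + n + 1) * meixnerPoly x₂ β₂ c (n + 1)))) 0 := by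
  set E := cdHahnReg y a b (1 - a + p)
  set M : ℝ → ℝ := fun s => meixnerPoly x₁ β₁ c (p + s) * meixnerPoly x₂ β₂ c s with hM
  have hMsub (v : ℝ) : IsSubexponential fun n => M (v + n) := by
    simpa only [hM, add_assoc] using isSubexponential_meixnerPoly_mul x₁ x₂ β₁ β₂ c (p + v) v
  have hpoly (v : ℝ) : IsSubexponential fun n => v + (n : ℝ) :=
    (IsSubexponential.const v).add .natCast
  have hdown : Summable fun n : ℕ => -(E n * c ^ n * ((p + n) * (0 + n) * (M (-1 + n) * c⁻¹))) :=
    (summable_cdHahnReg_mul (((hpoly p).mul (hpoly 0)).mul ((hMsub (-1)).mul (.const c⁻¹))) hc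
      y a b _).neg
  have hup : Summable fun n : ℕ =>
      -(E n * c ^ n * ((p + β₁ + n) * (β₂ + n) * (M (1 + n) * c))) :=
    (summable_cdHahnReg_mul (((hpoly (p + β₁)).mul (hpoly β₂)).mul ((hMsub 1).mul (.const c))) hc
      y a b _).neg
  refine (hasSum_add_add_of_shifted_add_eq_zero (Z := fun n : ℕ => E n * c ^ n *
    ((2 * (p + n) * n + n * β₁ + (p + n) * β₂ + (a * b + (a + b) * (1 - a) - y)) * M n))
    hdown hup ?_ ?_ fun n => ?_).congr_fun fun n => ?_
  · simp
  · have h := cdHahnReg_one y a b (1 - a + p)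
    subst hβ₁ hβ₂
    simp only [Nat.cast_zero, Nat.cast_one, pow_zero, pow_one, mul_zero, zero_mul, add_zero,
      zero_add, mul_one, neg_add_cancel]
    field_simp
    linear_combination -M 0 * h
  · have h := cdHahnReg_add_two y a b (1 - a + p) n
    subst hβ₁ hβ₂
    push_cast
    rw [show -1 + ((n : ℝ) + 2) = n + 1 by ring, add_comm 1 (n : ℝ)]
    field_simp
    linear_combination -M (n + 1) * c ^ n * c ^ 2 * h
  · simp only [hM, ← add_sub_assoc, ← add_assoc, add_comm (1 : ℝ), neg_add_eq_sub]
    ring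

lemma meixnerPairing_recurrence (hc0 : c ≠ 0) (hc : |c| < 1 / 2)
    (h₁ : ∀ j : ℕ, b + 1 - a + j ≠ 0) (h₂ : ∀ j : ℕ, a + b + j ≠ 0) (y p : ℝ) (x₁ x₂ : ℕ) :
    c * (x₁ + (b + 1 - a)) * (x₂ + (a + b)) * meixnerPairing y a b c p (x₁ + 1) (x₂ + 1) =
      (2 * x₁ * x₂ + x₂ * (b + 1 - a) + x₁ * (a + b) + (a * b + (a + b) * (1 - a) - y)) *
          meixnerPairing y a b c p x₁ x₂ -
        x₁ * x₂ / c * meixnerPairing y a b c p (x₁ - 1) (x₂ - 1) := by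
  have hsum (m₁ m₂ : ℕ) := (summable_meixnerPairing hc y a b p m₁ m₂).hasSum
  have h := ((((hsum x₁ x₂).mul_left (2 * x₁ * x₂ + x₂ * (b + 1 - a) + x₁ * (a + b) +
      (a * b + (a + b) * (1 - a) - y))).sub ((hsum (x₁ - 1) (x₂ - 1)).mul_left
      (x₁ * x₂ / c))).sub ((hsum (x₁ + 1) (x₂ + 1)).mul_left
      (c * (x₁ + (b + 1 - a)) * (x₂ + (a + b))))).unique
    ((hasSum_cdHahnReg_mul_meixner_operator hc0 hc y a b p x₁ x₂ rfl rfl).congr_fun fun n => ?_)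
  · exact (sub_eq_zero.1 h).symm
  · linear_combination -cdHahnReg y a b (1 - a + p) n * c ^ n *
      meixnerPoly_mul_meixnerPoly_bispectral h₁ h₂ hc0 x₁ x₂ (p + n) n

/-- The pairing `meixnerPairing` scaled so that it is given by the closed formula
`meixnerBilinear_eq`. -/
noncomputable def meixnerBilinear (y a b c p : ℝ) (x₁ x₂ : ℕ) : ℝ :=
  (-1) ^ (x₁ + x₂) * c ^ x₁ * (1 - c) ^ (b + 1 - a + p) * poch (b + 1 - a) x₁ *
    poch (a + b) x₂ * meixnerPairing y a b c p x₁ x₂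

lemma meixnerBilinear_succ_succ (hc0 : c ≠ 0) (hc : |c| < 1 / 2)
    (h₁ : ∀ j : ℕ, b + 1 - a + j ≠ 0) (h₂ : ∀ j : ℕ, a + b + j ≠ 0) (y p : ℝ) (x₁ x₂ : ℕ) :
    meixnerBilinear y a b c p (x₁ + 1) (x₂ + 1) =
      (2 * x₁ * x₂ + x₂ * (b + 1 - a) + x₁ * (a + b) + (a * b + (a + b) * (1 - a) - y)) *
          meixnerBilinear y a b c p x₁ x₂ -
        x₁ * x₂ * (x₁ - 1 + (b + 1 - a)) * (x₂ - 1 + (a + b)) *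
          meixnerBilinear y a b c p (x₁ - 1) (x₂ - 1) := by
  set w : ℝ := (-1) ^ (x₁ + x₂) * c ^ x₁ * (1 - c) ^ (b + 1 - a + p) * poch (b + 1 - a) x₁ *
    poch (a + b) x₂ with hw
  have hup : meixnerBilinear y a b c p (x₁ + 1) (x₂ + 1) =
      w * (c * (x₁ + (b + 1 - a)) * (x₂ + (a + b)) *
        meixnerPairing y a b c p (x₁ + 1) (x₂ + 1)) := by
    rw [meixnerBilinear, poch_succ, poch_succ, hw]
    ring
  have hdown : x₁ * x₂ * (x₁ - 1 + (b + 1 - a)) * (x₂ - 1 + (a + b)) *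
      meixnerBilinear y a b c p (x₁ - 1) (x₂ - 1) =
      w * (x₁ * x₂ / c * meixnerPairing y a b c p (x₁ - 1) (x₂ - 1)) := by
    rcases x₁ with _ | x₁
    · simp
    rcases x₂ with _ | x₂
    · simp
    rw [Nat.add_sub_cancel, Nat.add_sub_cancel, meixnerBilinear, hw, poch_succ, poch_succ]
    push_cast
    field_simp
    ring
  rw [hup, hdown, meixnerPairing_recurrence hc0 hc h₁ h₂, meixnerBilinear, ← hw]
  ring

lemma meixnerBilinear_zero_left (hc0 : c ≠ 0) (hc : |c| < 1 / 2) (h₂ : ∀ j : ℕ, a + b + j ≠ 0)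
    (y p : ℝ) (x : ℕ) :
    meixnerBilinear y a b c p 0 x =
      cdHahn x y a b (1 - a - x) * regGauss (1 - a + p) y (p + 1 + x) (c / (c - 1)) := by
  have h := tsum_cdHahnReg_mul_meixnerPoly_natCast hc0 hc h₂ y (1 - a + p) x
  rw [show b + (1 - a + p) = b + 1 - a + p by ring,
    show a + (1 - a + p) + x = p + 1 + x by ring] at h
  simp only [meixnerBilinear, meixnerPairing, meixnerPoly_zero, poch_zero, zero_add, one_mul,
    pow_zero, mul_one]
  rw [cdHahn_of_add_eq_one_sub]
  linear_combination (-1) ^ x * h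

lemma meixnerBilinear_zero_right (hc0 : c ≠ 0) (hc : |c| < 1 / 2)
    (h₁ : ∀ j : ℕ, b + 1 - a + j ≠ 0) (y p : ℝ) (x : ℕ) :
    meixnerBilinear y a b c p x 0 = regGauss (1 - a + p) y (p + 1 - x) (c / (c - 1)) := by
  have h := tsum_cdHahnReg_mul_meixnerPoly_add hc0 hc h₁ y
    (show a + (1 - a + p) = p + 1 by ring) (show b + (1 - a + p) = b + 1 - a + p by ring) x
  rw [show b + (1 - a + p) = b + 1 - a + p by ring] at h
  simpa only [meixnerBilinear, meixnerPairing, meixnerPoly_zero, poch_zero, add_zero, mul_one]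
    using h

end meixnerPairing

lemma eq_of_diagonal_recurrence {R : Type*} [Ring R] {F G P Q : ℕ → ℕ → R}
    (hF : ∀ m n, F (m + 1) (n + 1) = P m n * F m n - Q m n * F (m - 1) (n - 1))
    (hG : ∀ m n, G (m + 1) (n + 1) = P m n * G m n - Q m n * G (m - 1) (n - 1))
    (hleft : ∀ n, F 0 n = G 0 n) (hright : ∀ m, F m 0 = G m 0) (m n : ℕ) : F m n = G m n := by
  induction m using Nat.strong_induction_on generalizing n with
  | _ m ih =>
    rcases m with _ | m
    · exact hleft n
    rcases n with _ | n
    · exact hright _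
    rw [hF, hG, ih m (by omega), ih (m - 1) (by omega)]

lemma meixnerBilinear_eq {a b c : ℝ} (hc0 : c ≠ 0) (hc : |c| < 1 / 2)
    (h₁ : ∀ j : ℕ, b + 1 - a + j ≠ 0) (h₂ : ∀ j : ℕ, a + b + j ≠ 0) (y p : ℝ) (x₁ x₂ : ℕ) :
    meixnerBilinear y a b c p x₁ x₂ = cdHahn x₂ y a b (1 - a + x₁ - x₂) *
      regGauss (1 - a + p) y (p + 1 + x₂ - x₁) (c / (c - 1)) := by
  refine eq_of_diagonal_recurrence (meixnerBilinear_succ_succ hc0 hc h₁ h₂ y p)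
    (G := fun m n => cdHahn n y a b (1 - a + m - n) *
      regGauss (1 - a + p) y (p + 1 + n - m) (c / (c - 1)))
    (fun m n => ?_) (fun n => ?_) (fun m => ?_) x₁ x₂
  · have hd : (1 : ℝ) - a + (m + 1 : ℕ) - (n + 1 : ℕ) = 1 - a + m - n := by push_cast; ring
    have hγ : p + 1 + ((n + 1 : ℕ) : ℝ) - (m + 1 : ℕ) = p + 1 + n - m := by push_cast; ring
    rw [hd, hγ, cdHahn_succ]
    rcases m with _ | m
    · simp only [Nat.cast_zero]
      ring
    rcases n with _ | n
    · simp only [Nat.cast_zero]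
      ring
    have hd : (1 : ℝ) - a + (m + 1 : ℕ) - (n + 1 : ℕ) = 1 - a + m - n := by push_cast; ring
    have hγ : p + 1 + ((n + 1 : ℕ) : ℝ) - (m + 1 : ℕ) = p + 1 + n - m := by push_cast; ring
    rw [hd, hγ]
    simp only [Nat.add_sub_cancel]
    push_cast
    ring
  · simpa using meixnerBilinear_zero_left hc0 hc h₂ y p n
  · simpa [cdHahn_zero] using meixnerBilinear_zero_right hc0 hc h₁ y p m

/-! ### The bilinear generating function -/

lemma abs_div_sub_one_lt_one {c : ℝ} (hc : |c| < 1 / 2) : |c / (c - 1)| < 1 := by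
  have hpos := (abs_lt.1 hc).2
  rw [abs_div, abs_of_neg (show c - 1 < 0 by linarith), div_lt_one (by linarith)]
  linarith

theorem meixner_bilinear_generating_function_general (k₁ k₂ c : ℝ)
    (hk₁ : ∀ j : ℕ, 2 * k₁ + j ≠ 0) (hk₂ : ∀ j : ℕ, 2 * k₂ + j ≠ 0) (hc0 : c ≠ 0)
    (hc : |c| < 1 / 2) (x₁ x₂ : ℕ) (p y : ℝ) :
    Summable (fun m : ℕ => |(∏ l ∈ range m, ((p + k₁ - k₂ + 1 / 2 + l) ^ 2 + y)) *
        (c / (c - 1)) ^ m / ((m.factorial : ℝ) * Real.Gamma (p + x₂ - x₁ + 1 + m))|) ∧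
    Summable (fun n : ℕ =>
      |(-1 : ℝ) ^ (x₁ + x₂) * c ^ (n + x₁) * (1 - c) ^ (2 * k₁ + p) *
          poch (2 * k₁) x₁ * poch (2 * k₂) x₂ / ((n.factorial : ℝ) * Real.Gamma (n + p + 1)) *
        cdHahn n y (k₂ - k₁ + 1 / 2) (k₁ + k₂ - 1 / 2) (k₁ - k₂ + p + 1 / 2) *
        meixnerPoly x₁ (2 * k₁) c (n + p) * meixner n x₂ (2 * k₂) c|) ∧
    cdHahn x₂ y (k₂ - k₁ + 1 / 2) (k₁ + k₂ - 1 / 2) (k₁ - k₂ + x₁ - x₂ + 1 / 2) *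
      ∑' m : ℕ, (∏ l ∈ range m, ((p + k₁ - k₂ + 1 / 2 + l) ^ 2 + y)) *
        (c / (c - 1)) ^ m / ((m.factorial : ℝ) * Real.Gamma (p + x₂ - x₁ + 1 + m)) =
    ∑' n : ℕ,
      (-1 : ℝ) ^ (x₁ + x₂) * c ^ (n + x₁) * (1 - c) ^ (2 * k₁ + p) *
          poch (2 * k₁) x₁ * poch (2 * k₂) x₂ / ((n.factorial : ℝ) * Real.Gamma (n + p + 1)) *
        cdHahn n y (k₂ - k₁ + 1 / 2) (k₁ + k₂ - 1 / 2) (k₁ - k₂ + p + 1 / 2) *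
        meixnerPoly x₁ (2 * k₁) c (n + p) * meixner n x₂ (2 * k₂) c := by
  obtain ⟨a, ha⟩ : ∃ a, a = k₂ - k₁ + 1 / 2 := ⟨_, rfl⟩
  obtain ⟨b, hb⟩ : ∃ b, b = k₁ + k₂ - 1 / 2 := ⟨_, rfl⟩
  have hβ₁ : 2 * k₁ = b + 1 - a := by rw [ha, hb]; ring
  have hβ₂ : 2 * k₂ = a + b := by rw [ha, hb]; ring
  have hd (t : ℝ) : k₁ - k₂ + t + 1 / 2 = 1 - a + t := by rw [ha]; ring
  have hgauss (m : ℕ) : (∏ l ∈ range m, ((p + k₁ - k₂ + 1 / 2 + l) ^ 2 + y)) *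
      (c / (c - 1)) ^ m / ((m.factorial : ℝ) * Real.Gamma (p + x₂ - x₁ + 1 + m)) =
      gaussCoeff (1 - a + p) y (p + 1 + x₂ - x₁) m * (c / (c - 1)) ^ m := by
    rw [gaussCoeff, quadPoch, ← hd p, show p + 1 + (x₂ : ℝ) - x₁ = p + x₂ - x₁ + 1 by ring,
      show k₁ - k₂ + p + 1 / 2 = p + k₁ - k₂ + 1 / 2 by ring, div_mul_eq_mul_div]
  have hpairing (n : ℕ) : (-1 : ℝ) ^ (x₁ + x₂) * c ^ (n + x₁) * (1 - c) ^ (b + 1 - a + p) *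
      poch (b + 1 - a) x₁ * poch (a + b) x₂ / ((n.factorial : ℝ) * Real.Gamma (n + p + 1)) *
      cdHahn n y a b (1 - a + p) * meixnerPoly x₁ (b + 1 - a) c (n + p) * meixner n x₂ (a + b) c =
      (-1) ^ (x₁ + x₂) * c ^ x₁ * (1 - c) ^ (b + 1 - a + p) * poch (b + 1 - a) x₁ *
        poch (a + b) x₂ * (cdHahnReg y a b (1 - a + p) n * c ^ n *
          (meixnerPoly x₁ (b + 1 - a) c (p + n) * meixnerPoly x₂ (a + b) c n)) := by
    rw [cdHahnReg, meixner_eq_meixnerPoly, show a + (1 - a + p) + (n : ℝ) = n + p + 1 by ring,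
      add_comm (n : ℝ) p, pow_add]
    ring
  have hfinal := meixnerBilinear_eq hc0 hc (hβ₁ ▸ hk₁) (hβ₂ ▸ hk₂) y p x₁ x₂
  have hd' : k₁ - k₂ + x₁ - x₂ + 1 / 2 = 1 - a + x₁ - x₂ := by rw [ha]; ring
  simp only [← ha, ← hb, hβ₁, hβ₂, hd, hd', hgauss, hpairing, tsum_mul_left]
  exact ⟨(summable_gaussCoeff_mul_pow _ y _ (abs_div_sub_one_lt_one hc)).abs,
    ((summable_meixnerPairing hc y a b p x₁ x₂).mul_left _).abs, hfinal.symm⟩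

-- When `n + p < 0`, both sides vanish: Mathlib sets `Γ = 0` at its pole `n + p + 1`.
lemma div_Gamma_mul_meixner_toNat (n x : ℕ) (p : ℤ) (β c w k s : ℝ) :
    w / (k * Real.Gamma ((n : ℝ) + p + 1)) * s * meixner ((n : ℤ) + p).toNat x β c =
      w / (k * Real.Gamma ((n : ℝ) + p + 1)) * s * meixnerPoly x β c (n + p) := by
  rcases le_or_gt 0 ((n : ℤ) + p) with h | h
  · have hcast : (((n : ℤ) + p).toNat : ℝ) = n + p := by exact_mod_cast Int.toNat_of_nonneg h
    rw [meixner_eq_meixnerPoly, hcast]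
  · obtain ⟨m, hm⟩ := Int.eq_ofNat_of_zero_le (show 0 ≤ -((n : ℤ) + p + 1) by omega)
    have hpole : (n : ℝ) + p + 1 = -(m : ℝ) := by exact_mod_cast neg_eq_iff_eq_neg.1 hm
    simp only [hpole, Real.Gamma_neg_nat_eq_zero, mul_zero, div_zero, zero_mul]

/-- The general bilinear generating function for Meixner polynomials:
for `0 < k₁ ≤ k₂`, `0 < c < 1/2`, `x₁, x₂ ∈ ℕ`, `p ∈ ℤ`, `y ∈ ℝ`, both series converge
absolutely and
`S_{x₂}(y;k₂−k₁+1/2,k₁+k₂−1/2,k₁−k₂+x₁−x₂+1/2)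
  · ∑_{m=0}^∞ [∏_{l<m}((p+k₁−k₂+1/2+l)²+y)](c/(c−1))^m/(m! Γ(p+x₂−x₁+1+m))
  = ∑_{n=0}^∞ Cₙ S_n(y;k₂−k₁+1/2,k₁+k₂−1/2,k₁−k₂+p+1/2) M_{n+p}(x₁;2k₁,c) M_n(x₂;2k₂,c)`,
with `Cₙ = (−1)^{x₁+x₂} c^{n+x₁}(1−c)^{2k₁+p}(2k₁)_{x₁}(2k₂)_{x₂}/(n! Γ(n+p+1))`,
where `1/Γ` is `0` at non-positive integers (so summands with `n+p<0` vanish). -/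
theorem meixner_bilinear_generating_function (k₁ k₂ c : ℝ) (hk₁ : 0 < k₁) (hk : k₁ ≤ k₂)
    (hc0 : 0 < c) (hc1 : c < 1 / 2) (x₁ x₂ : ℕ) (p : ℤ) (y : ℝ) :
    Summable (fun m : ℕ => |(∏ l ∈ Finset.range m, ((p + k₁ - k₂ + 1 / 2 + l) ^ 2 + y)) *
        (c / (c - 1)) ^ m /
        ((m.factorial : ℝ) * Real.Gamma ((p : ℝ) + x₂ - x₁ + 1 + m))|) ∧
    Summable (fun n : ℕ =>
      |(-1 : ℝ) ^ (x₁ + x₂) * c ^ (n + x₁) * (1 - c) ^ (2 * k₁ + (p : ℝ)) *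
          poch (2 * k₁) x₁ * poch (2 * k₂) x₂ /
          ((n.factorial : ℝ) * Real.Gamma ((n : ℝ) + p + 1)) *
        cdHahn n y (k₂ - k₁ + 1 / 2) (k₁ + k₂ - 1 / 2) (k₁ - k₂ + p + 1 / 2) *
        meixner ((n : ℤ) + p).toNat x₁ (2 * k₁) c * meixner n x₂ (2 * k₂) c|) ∧
    cdHahn x₂ y (k₂ - k₁ + 1 / 2) (k₁ + k₂ - 1 / 2) (k₁ - k₂ + x₁ - x₂ + 1 / 2) *
      ∑' m : ℕ, (∏ l ∈ Finset.range m, ((p + k₁ - k₂ + 1 / 2 + l) ^ 2 + y)) *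
        (c / (c - 1)) ^ m /
        ((m.factorial : ℝ) * Real.Gamma ((p : ℝ) + x₂ - x₁ + 1 + m)) =
    ∑' n : ℕ,
      (-1 : ℝ) ^ (x₁ + x₂) * c ^ (n + x₁) * (1 - c) ^ (2 * k₁ + (p : ℝ)) *
          poch (2 * k₁) x₁ * poch (2 * k₂) x₂ /
          ((n.factorial : ℝ) * Real.Gamma ((n : ℝ) + p + 1)) *
        cdHahn n y (k₂ - k₁ + 1 / 2) (k₁ + k₂ - 1 / 2) (k₁ - k₂ + p + 1 / 2) *
        meixner ((n : ℤ) + p).toNat x₁ (2 * k₁) c * meixner n x₂ (2 * k₂) c := by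
  have hk₂ : 0 < k₂ := hk₁.trans_le hk
  simpa only [div_Gamma_mul_meixner_toNat] using
    meixner_bilinear_generating_function_general k₁ k₂ c (fun j => by positivity)
      (fun j => by positivity) hc0.ne' (by rwa [abs_of_pos hc0]) x₁ x₂ p y
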